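/- Let D ≥ 2, let q_1 < q_2 < ⋯ < q_L be pairwise coprime positive integers with q_1 > 1, and let σ_1, …, σ_d be arbitrary permutations of {1,…,D}. Then the D×D matrix R_D = (q_1·q_2⋯q_L)^D · I is a common right multiple of every matrix M(q_i, σ_j), 1 ≤ i ≤ L, 1 ≤ j ≤ d: for each i and j there exists a nonsingular D×D integer matrix P with R_D = M(q_i, σ_j)·P. -/

import Mathlib

/-- The `D × D` integer matrix `M(q, σ)`: diagonal entries all `q`, entry
`(σ(k), σ(k+1))` equal to `1` for `k = 1, …, D-1`, all other entries `0`. -/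
def Mmat {D : ℕ} (q : ℤ) (σ : Equiv.Perm (Fin D)) : Matrix (Fin D) (Fin D) ℤ :=
  Matrix.diagonal (fun _ => q) +
    ∑ k : Fin (D - 1),
      Matrix.single (σ ⟨(k : ℕ), by have := k.isLt; omega⟩)
        (σ ⟨(k : ℕ) + 1, by have := k.isLt; omega⟩) (1 : ℤ)

/-- Two square integer matrices are left coprime if every common left divisor of
them is unimodular. -/
def LeftCoprime {D : ℕ} (M N : Matrix (Fin D) (Fin D) ℤ) : Prop :=
  ∀ A : Matrix (Fin D) (Fin D) ℤ, A.det ≠ 0 →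
    (∃ B, M = A * B) → (∃ C, N = A * C) → (A.det = 1 ∨ A.det = -1)

/-- `A` is a right multiple of `M` if `A = M * P` for some nonsingular integer
matrix `P`. -/
def IsRightMultiple {D : ℕ} (A M : Matrix (Fin D) (Fin D) ℤ) : Prop :=
  ∃ P : Matrix (Fin D) (Fin D) ℤ, P.det ≠ 0 ∧ A = M * P

/-!
Conjugating `M(q, σ)` by the permutation matrix of `σ` gives `M(q, 1)`, which is upper triangular
with diagonal `q`; hence `det M(q, σ) = q ^ D`, whatever `σ` is. Since `M * adj M = det M • I`, the
scalar matrix of any nonzero multiple of `det M` is a right multiple of `M`, and `q_i ^ D` divides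
`(q_1 ⋯ q_L) ^ D`.
-/

theorem dvd_smul_one_of_det_dvd {n R : Type*} [Fintype n] [DecidableEq n] [CommRing R]
    {M : Matrix n n R} {r : R} (h : M.det ∣ r) : M ∣ r • (1 : Matrix n n R) := by
  obtain ⟨c, rfl⟩ := h
  refine ⟨c • M.adjugate, ?_⟩
  rw [Matrix.mul_smul, Matrix.mul_adjugate, smul_smul, mul_comm]

section

variable {D : ℕ}

theorem IsRightMultiple.of_dvd {A M : Matrix (Fin D) (Fin D) ℤ} (hA : A.det ≠ 0) (h : M ∣ A) :
    IsRightMultiple A M := by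
  obtain ⟨P, rfl⟩ := h
  rw [Matrix.det_mul] at hA
  exact ⟨P, right_ne_zero_of_mul hA, rfl⟩

theorem IsRightMultiple.smul_one_of_det_dvd {M : Matrix (Fin D) (Fin D) ℤ} {r : ℤ} (hr : r ≠ 0)
    (h : M.det ∣ r) : IsRightMultiple (r • (1 : Matrix (Fin D) (Fin D) ℤ)) M := by
  refine .of_dvd ?_ (dvd_smul_one_of_det_dvd h)
  rw [Matrix.det_smul, Matrix.det_one, mul_one]
  exact pow_ne_zero _ hr

theorem Mmat_submatrix_self (q : ℤ) (σ : Equiv.Perm (Fin D)) :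
    (Mmat q σ).submatrix σ σ = Mmat q 1 := by
  ext a b
  simp only [Mmat, Matrix.submatrix_apply, Matrix.add_apply, Matrix.sum_apply,
    Matrix.diagonal_apply, Matrix.single_apply, EmbeddingLike.apply_eq_iff_eq,
    Equiv.Perm.coe_one, id_eq]

theorem isUpperTriangular_Mmat_one (q : ℤ) :
    (Mmat q (1 : Equiv.Perm (Fin D))).IsUpperTriangular := by
  refine (Matrix.blockTriangular_diagonal _).add <|
    Finset.sum_induction _ Matrix.IsUpperTriangular (fun _ _ => Matrix.BlockTriangular.add)
      Matrix.blockTriangular_zero fun k _ => ?_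
  exact Matrix.blockTriangular_single (Fin.mk_le_mk.mpr k.val.le_succ) 1

theorem Mmat_apply_self (q : ℤ) (σ : Equiv.Perm (Fin D)) (a : Fin D) : Mmat q σ a a = q := by
  rw [Mmat, Matrix.add_apply, Matrix.diagonal_apply_eq, Matrix.sum_apply, add_eq_left]
  refine Finset.sum_eq_zero fun k _ => Matrix.single_apply_of_ne _ _ _ _ _ ?_
  rintro ⟨hrow, hcol⟩
  have hk : (k : ℕ) = k + 1 := Fin.mk_eq_mk.mp (σ.injective (hrow.trans hcol.symm))
  exact k.val.succ_ne_self hk.symm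

theorem det_Mmat (q : ℤ) (σ : Equiv.Perm (Fin D)) : (Mmat q σ).det = q ^ D :=
  calc
    (Mmat q σ).det = (Mmat q 1).det := by
      rw [← Mmat_submatrix_self q σ, Matrix.det_submatrix_equiv_self]
    _ = ∏ a : Fin D, Mmat q 1 a a := Matrix.det_of_isUpperTriangular (isUpperTriangular_Mmat_one q)
    _ = q ^ D := by
      simp only [Mmat_apply_self, Finset.prod_const, Finset.card_univ, Fintype.card_fin]

theorem stmt_13_general {ι : Type*} [Fintype ι] (q : ι → ℤ) (hq : ∀ i, q i ≠ 0) (i : ι)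
    (σ : Equiv.Perm (Fin D)) :
    IsRightMultiple ((∏ i, q i) ^ D • (1 : Matrix (Fin D) (Fin D) ℤ)) (Mmat (q i) σ) := by
  have prod_ne_zero : ∏ i, q i ≠ 0 := Finset.prod_ne_zero_iff.mpr fun i _ => hq i
  have dvd_prod : q i ∣ ∏ i, q i := Finset.dvd_prod_of_mem q (Finset.mem_univ i)
  refine .smul_one_of_det_dvd (pow_ne_zero D prod_ne_zero) ?_
  rw [det_Mmat]
  exact pow_dvd_pow_of_dvd dvd_prod D

end

/-- `R_D = (q_1⋯q_L)^D • I` is a common right multiple of every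
matrix `M(q_i, σ_j)` for arbitrary permutations `σ_1, …, σ_d`. -/
theorem stmt_13 (D L d : ℕ) (hD : 2 ≤ D) (hL : 1 ≤ L)
    (q : Fin L → ℤ) (hmono : StrictMono q) (hpos : ∀ i, 0 < q i)
    (hq1 : 1 < q ⟨0, hL⟩)
    (hcop : ∀ i i' : Fin L, i ≠ i' → IsCoprime (q i) (q i'))
    (σ : Fin d → Equiv.Perm (Fin D)) :
    ∀ (i : Fin L) (j : Fin d),
      IsRightMultiple (((∏ i, q i) ^ D) • (1 : Matrix (Fin D) (Fin D) ℤ))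
        (Mmat (q i) (σ j)) := by
  exact fun i j => stmt_13_general q (fun i => (hpos i).ne') i (σ j)
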